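/- arXiv:2501.18843 — 2 statements merged into one kernel-verified Lean document; each statement's English description precedes it below -/
import Mathlib

section
/- Let T > 0, ℓ > 0 and d be reals with 0 < d ≤ ℓ and ℓ + d ≤ T, and let g : ℝ → Bool be a signal that is periodic with period T and is false exactly on the interval [0, ℓ) modulo T, i.e. g(t) = false iff t − T·⌊t/T⌋ ∈ [0, ℓ). Then the signal h defined by h(t) = ¬(g(t) ∧ g(t − d)) (the NAND of g with its d-delayed copy) is periodic with period T and is true exactly on the interval [0, ℓ + d) modulo T; in particular, h has high time ℓ + d per period. -/
/-!
Let `r` be the representative of `t` modulo `T` in the window `[a, a + T)` starting at the falling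
edge `a`. If `r < b`, the signal itself is low at `t`. Otherwise `a + d ≤ b ≤ r`, so stepping back
by `d` stays inside the window and `t - d` has representative `r - d`; hence the delayed copy is low
at `t` exactly when `r < b + d`.
-/

section Residue

variable {α : Type*} [AddCommGroup α] [LinearOrder α] [IsOrderedAddMonoid α] [Archimedean α]
  {p a b d t : α}

theorem toIcoMod_sub_eq_sub_of_add_le (hp : 0 < p) (hd : 0 ≤ d) (h : a + d ≤ toIcoMod hp a t) :
    toIcoMod hp a (t - d) = toIcoMod hp a t - d := by
  have hmem : toIcoMod hp a t - d ∈ Set.Ico a (a + p) :=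
    ⟨le_sub_iff_add_le.2 h, (sub_le_self _ hd).trans_lt (toIcoMod_lt_right hp a t)⟩
  refine (toIcoMod_eq_iff hp).2 ⟨hmem, toIcoDiv hp a t, ?_⟩
  rw [sub_add_eq_add_sub, toIcoMod_add_toIcoDiv_zsmul]

theorem toIcoMod_lt_or_toIcoMod_sub_lt_iff (hp : 0 < p) (hd : 0 ≤ d) (hab : a + d ≤ b) :
    toIcoMod hp a t < b ∨ toIcoMod hp a (t - d) < b ↔ toIcoMod hp a t < b + d := by
  rcases lt_or_ge (toIcoMod hp a t) b with hlow | hhigh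
  · exact iff_of_true (Or.inl hlow) (hlow.trans_le (le_add_of_nonneg_right hd))
  · rw [toIcoMod_sub_eq_sub_of_add_le hp hd (hab.trans hhigh), or_iff_right hhigh.not_gt,
      sub_lt_iff_lt_add]

theorem toIcoMod_mem_Ico_iff_lt (hp : 0 < p) :
    toIcoMod hp a t ∈ Set.Ico a b ↔ toIcoMod hp a t < b :=
  and_iff_right (left_le_toIcoMod hp a t)

end Residue

theorem toIcoMod_zero_eq_sub_mul_floor {K : Type*} [Field K] [LinearOrder K]
    [IsStrictOrderedRing K] [FloorRing K] {p : K} (hp : 0 < p) (t : K) :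
    toIcoMod hp 0 t = t - p * ⌊t / p⌋ := by
  rw [toIcoMod, toIcoDiv_eq_floor, sub_zero, zsmul_eq_mul, mul_comm]

theorem pulse_shaper_stage2_general {α : Type*} [AddCommGroup α] [LinearOrder α]
    [IsOrderedAddMonoid α] [Archimedean α] {T a b d : α} (hT : 0 < T) (hd : 0 ≤ d)
    (hab : a + d ≤ b) {g h : α → Bool}
    (hg : ∀ t, g t = false ↔ toIcoMod hT a t ∈ Set.Ico a b)
    (hh : ∀ t, h t = !(g t && g (t - d))) :
    Function.Periodic h T ∧ ∀ t, h t = true ↔ toIcoMod hT a t ∈ Set.Ico a (b + d) := by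
  have hhigh (t : α) : h t = true ↔ toIcoMod hT a t ∈ Set.Ico a (b + d) := by
    have hnand : h t = true ↔ g t = false ∨ g (t - d) = false := by
      rw [hh, Bool.not_eq_true', Bool.and_eq_false_iff]
    simp only [hnand, hg, toIcoMod_mem_Ico_iff_lt, toIcoMod_lt_or_toIcoMod_sub_lt_iff hT hd hab]
  refine ⟨fun t => Bool.eq_iff_iff.2 ?_, hhigh⟩
  rw [hhigh, hhigh, toIcoMod_add_right]

/-- second pulse-shaper stage. `g` is periodic with period `T`
and low exactly on `[0, ℓ)` modulo `T`; then `h = NAND(g, d-delayed g)` is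
periodic with period `T` and high exactly on `[0, ℓ + d)` modulo `T`. -/
theorem pulse_shaper_stage2
    (T ℓ d : ℝ) (hT : 0 < T) (hℓ : 0 < ℓ) (hd : 0 < d) (hdℓ : d ≤ ℓ)
    (hℓdT : ℓ + d ≤ T)
    (g : ℝ → Bool)
    (hgper : ∀ t : ℝ, g (t + T) = g t)
    (hg : ∀ t : ℝ, g t = false ↔ t - T * (⌊t / T⌋ : ℝ) ∈ Set.Ico (0 : ℝ) ℓ)
    (h : ℝ → Bool)
    (hh : ∀ t : ℝ, h t = !(g t && g (t - d))) :
    (∀ t : ℝ, h (t + T) = h t) ∧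
    (∀ t : ℝ, h t = true ↔ t - T * (⌊t / T⌋ : ℝ) ∈ Set.Ico (0 : ℝ) (ℓ + d)) := by
  simp only [← toIcoMod_zero_eq_sub_mul_floor hT] at hg ⊢
  exact pulse_shaper_stage2_general hT hd.le ((zero_add d).trans_le hdℓ) hg hh
end

section
/- Let T > 0 and x be reals with 2T/3 < x < T, and let f : ℝ → Bool be the clock signal with period T and high time x, i.e. f(t) = true iff t − T·⌊t/T⌋ ∈ [0, x). Define g(t) = ¬(f(t) ∧ ¬f(t − T/3)). Then g is periodic with period T and is false exactly on [x − 2T/3, T/3) modulo T. In particular, the low interval of the first pulse-shaper stage begins x − 2T/3 > 0 time units after the rising edge of the input pulse (rather than at the rising edge) and lasts only T − x < T/3 time units. -/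
/-!
Let `φ ∈ [0, T)` be the phase of `t` and delay by `d ∈ [0, T]`. At phase `φ ≥ d` the delayed clock
is at phase `φ - d ≤ φ`, hence high whenever the clock is. At phase `φ < d` it is still in its
previous period, at phase `φ + (T - d)`, hence low exactly when `x - (T - d) ≤ φ`. So the stage is
low on the part of `[x - (T - d), min x d)` in `[0, T)`, which starts at the rising edge as long as
`x ≤ T - d` and strictly after it when `x > T - d`.
-/

open Set Function

section DelayedPhase

variable {G : Type*} [AddCommGroup G] [LinearOrder G] [IsOrderedAddMonoid G] [Archimedean G]
  {p : G} (hp : 0 < p) {a b d t : G}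

theorem toIcoMod_sub_of_lt_add (hd : d ≤ p) (ht : toIcoMod hp a t < a + d) :
    toIcoMod hp a (t - d) = toIcoMod hp a t + (p - d) := by
  have hmem := toIcoMod_mem_Ico hp a t
  refine (toIcoMod_eq_iff hp).2 ⟨⟨?_, ?_⟩, toIcoDiv hp a t - 1, ?_⟩
  · grind
  · grind
  · rw [toIcoMod, sub_smul, one_smul]
    abel

theorem toIcoMod_sub_of_add_le (hd : 0 ≤ d) (ht : a + d ≤ toIcoMod hp a t) :
    toIcoMod hp a (t - d) = toIcoMod hp a t - d := by
  refine (toIcoMod_eq_iff hp).2 ⟨⟨le_sub_iff_add_le.2 ht, ?_⟩, toIcoDiv hp a t, ?_⟩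
  · exact (sub_le_self _ hd).trans_lt (toIcoMod_lt_right hp a t)
  · rw [toIcoMod]
    abel

theorem toIcoMod_mem_Ico_and_toIcoMod_sub_notMem_Ico_iff (hd₀ : 0 ≤ d) (hdp : d ≤ p) :
    toIcoMod hp a t ∈ Ico a b ∧ toIcoMod hp a (t - d) ∉ Ico a b ↔
      toIcoMod hp a t ∈ Ico (b - (p - d)) (min b (a + d)) := by
  have hmem := toIcoMod_mem_Ico hp a t
  rcases lt_or_ge (toIcoMod hp a t) (a + d) with ht | ht
  · rw [toIcoMod_sub_of_lt_add hp hdp ht]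
    grind
  · rw [toIcoMod_sub_of_add_le hp hd₀ ht]
    grind

end DelayedPhase

/-- The first stage of the pulse shaper, with delay `d` in place of `T / 3`: the NAND of the input
signal `f` and its inverted copy delayed by `d`. -/
def pulseShaperStage {G : Type*} [Sub G] (d : G) (f : G → Bool) (t : G) : Bool :=
  !(f t && !(f (t - d)))

theorem pulseShaperStage_eq_false_iff {G : Type*} [Sub G] {d : G} {f : G → Bool} {t : G} :
    pulseShaperStage d f t = false ↔ f t = true ∧ ¬f (t - d) = true := by
  simp [pulseShaperStage]

theorem periodic_pulseShaperStage {G : Type*} [SubtractionCommMonoid G] {T : G} {f : G → Bool}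
    (hf : Periodic f T) (d : G) : Periodic (pulseShaperStage d f) T := fun t => by
  rw [pulseShaperStage, pulseShaperStage, hf t, add_sub_right_comm, hf (t - d)]

section Clock

variable {K : Type*} [Field K] [LinearOrder K] [IsStrictOrderedRing K] [FloorRing K]
  {T x d : K} {f : K → Bool}

theorem toIcoMod_zero_eq_sub_mul_floor_s3 (hT : 0 < T) (t : K) :
    toIcoMod hT 0 t = t - T * ⌊t / T⌋ := by
  rw [toIcoMod, toIcoDiv_eq_floor, sub_zero, zsmul_eq_mul, mul_comm]

/-- `f` is the clock with period `T` and high time `x`, with rising edges at the multiples of `T`.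
The constraint `0 < x < T` is not built in: when `0 < T`, the signal is constantly low for `x ≤ 0`
and constantly high for `T ≤ x`. -/
def IsClock (T x : K) (f : K → Bool) : Prop :=
  ∀ t, f t = true ↔ t - T * ⌊t / T⌋ ∈ Ico 0 x

namespace IsClock

theorem eq_true_iff_toIcoMod_mem (hf : IsClock T x f) (hT : 0 < T) (t : K) :
    f t = true ↔ toIcoMod hT 0 t ∈ Ico 0 x := by
  rw [toIcoMod_zero_eq_sub_mul_floor_s3, hf t]

theorem periodic (hf : IsClock T x f) (hT : 0 < T) : Periodic f T := fun t => by
  rw [Bool.eq_iff_iff, hf.eq_true_iff_toIcoMod_mem hT, hf.eq_true_iff_toIcoMod_mem hT,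
    toIcoMod_periodic hT 0 t]

theorem pulseShaperStage_eq_false_iff_mem_Ico (hf : IsClock T x f) (hT : 0 < T) (hd₀ : 0 ≤ d)
    (hdT : d ≤ T) (t : K) :
    pulseShaperStage d f t = false ↔ t - T * ⌊t / T⌋ ∈ Ico (x - (T - d)) (min x d) := by
  rw [pulseShaperStage_eq_false_iff, hf.eq_true_iff_toIcoMod_mem hT,
    hf.eq_true_iff_toIcoMod_mem hT,
    toIcoMod_mem_Ico_and_toIcoMod_sub_notMem_Ico_iff hT hd₀ hdT, zero_add,
    toIcoMod_zero_eq_sub_mul_floor_s3]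

end IsClock

theorem pulse_shaper_stage1_flaw_general (hT : 0 < T) (hd₀ : 0 ≤ d) (hdT : d ≤ T)
    (hf : IsClock T x f) :
    Periodic (pulseShaperStage d f) T ∧
      ∀ t, pulseShaperStage d f t = false ↔
        t - T * ⌊t / T⌋ ∈ Ico (x - (T - d)) (min x d) :=
  ⟨periodic_pulseShaperStage (hf.periodic hT) d,
    hf.pulseShaperStage_eq_false_iff_mem_Ico hT hd₀ hdT⟩

end Clock

/-- flawed behavior of the first pulse-shaper stage when the
input high time satisfies `2T/3 < x < T`: `g` is periodic with period `T` and
low exactly on `[x - 2T/3, T/3)` modulo `T`; in particular the low interval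
begins `x - 2T/3 > 0` after the rising edge and lasts only `T - x < T/3`. -/
theorem pulse_shaper_stage1_flaw
    (T x : ℝ) (hT : 0 < T) (hx1 : 2 * T / 3 < x) (hx2 : x < T)
    (f : ℝ → Bool)
    (hf : ∀ t : ℝ, f t = true ↔ t - T * (⌊t / T⌋ : ℝ) ∈ Set.Ico (0 : ℝ) x)
    (g : ℝ → Bool)
    (hg : ∀ t : ℝ, g t = !(f t && !(f (t - T / 3)))) :
    (∀ t : ℝ, g (t + T) = g t) ∧
    (∀ t : ℝ, g t = false ↔
      t - T * (⌊t / T⌋ : ℝ) ∈ Set.Ico (x - 2 * T / 3) (T / 3)) ∧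
    0 < x - 2 * T / 3 ∧ T - x < T / 3 := by
  obtain rfl : g = pulseShaperStage (T / 3) f := funext hg
  obtain ⟨hper, hlow⟩ :=
    pulse_shaper_stage1_flaw_general hT (d := T / 3) (by linarith) (by linarith) hf
  rw [show x - (T - T / 3) = x - 2 * T / 3 by ring, min_eq_right (by linarith)] at hlow
  exact ⟨hper, hlow, by linarith, by linarith⟩
end
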